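/- For every q ∈ (0,1) and every x ∈ ℝ, the series P_q(x) = 1/2 + 2∑_{j=1}^∞ cos(jx)/(q^j + q^{−j}) satisfies P_q(x) > (1/2 + 2q/((1+q²)(1−q)))·((1−q)/(1+q))^{4/(1−q²)}. -/

import Mathlib

/-!
Up to scaling, the kernel `P(x) = 1/2 + 2 ∑ cos (j x) / (q ^ j + q ^ (-j))` is the elliptic function
`dn`, and the bound is read off from its theta quotient.

* With `z = exp (i x)`, the kernel is `∑ z ^ j / (q ^ j + q ^ (-j))` over the integers. Put
  `θ(z) = ∑ q ^ (n ^ 2) z ^ n`. The Laurent coefficients `c m` of the product of the kernel with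
  `θ(-z)` satisfy `c (m + 1) = q ^ (2 m + 1) c m`, so this product is `c 0 * θ(z)`
  (`kern_mul_theta`).
* By the Jacobi triple product, obtained as the limit of its finite form with Gaussian binomial
  coefficients by dominated convergence (`partialProd_eq_tsum`, `partialProd_tendsto`),
  `θ(exp (i x))` is a positive constant times
  `G(x) = ∏ (1 + 2 q ^ (2 n + 1) cos x + q ^ (4 n + 2))`. Hence
  `P(x) G(x + π) G(0) = P(0) G(π) G(x)` (`exists_product_formula`).
* Factorwise `G(π) ≤ G(y) ≤ G(0)`, so `P(x) ≥ P(0) (G(π) / G(0)) ^ 2`. The quotient `G(π) / G(0)` is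
  the product of the squares of `(1 - q ^ (2 n + 1)) / (1 + q ^ (2 n + 1))`, and each such fraction
  is at least `((1 - q) / (1 + q)) ^ (q ^ (2 n))` by the power series of the logarithm
  (`rpow_le_of_scale`). Summing the exponents gives the power `4 / (1 - q ^ 2)`.
* Finally `P(0)` exceeds the first factor of the bound by comparison with a geometric series
  (`cosKern_zero_gt`).
-/

open Real

namespace DnKernel

/-! ### The kernel as a theta quotient -/

/-- The Fourier coefficients `1 / (q ^ j + q ^ (-j))` of the kernel, indexed by all integers. -/
noncomputable def sechCoeff (q : ℝ) (j : ℤ) : ℝ := 1 / (q ^ j + q ^ (-j))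

/-- The coefficients `q ^ (n ^ 2)` of the theta series. -/
noncomputable def gauss (q : ℝ) (n : ℤ) : ℝ := q ^ (n * n)

/-- The kernel as a Laurent series on the unit circle. -/
noncomputable def kern (q : ℝ) (z : ℂ) : ℂ := ∑' j : ℤ, (sechCoeff q j : ℂ) * z ^ j

/-- The theta series `∑ q ^ (n ^ 2) z ^ n`; its value at `z` is `θ₃`, its value at `-z` is `θ₄`. -/
noncomputable def theta (q : ℝ) (z : ℂ) : ℂ := ∑' n : ℤ, (gauss q n : ℂ) * z ^ n

/-- The `m`-th Laurent coefficient of the product `kern q z * theta q (-z)`. -/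
noncomputable def conv (q : ℝ) (m : ℤ) : ℝ :=
  ∑' n : ℤ, (-1) ^ n * gauss q n * sechCoeff q (m - n)

variable {q Q : ℝ}

lemma summable_pow_natAbs (hq : 0 < q) (hq1 : q < 1) : Summable fun n : ℤ => q ^ n.natAbs := by
  have h := summable_geometric_of_lt_one hq.le hq1
  exact Summable.of_nat_of_neg (by simpa using h) (by simpa using h)

lemma zpow_le_pow_natAbs (hq : 0 < q) (hq1 : q < 1) {n k : ℤ} (h : (n.natAbs : ℤ) ≤ k) :
    q ^ k ≤ q ^ n.natAbs := by
  rw [← zpow_natCast]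
  exact zpow_le_zpow_right_of_le_one₀ hq hq1.le h

lemma gauss_pos (hq : 0 < q) (n : ℤ) : 0 < gauss q n := zpow_pos hq _

lemma gauss_le (hq : 0 < q) (hq1 : q < 1) (n : ℤ) : gauss q n ≤ q ^ n.natAbs := by
  refine zpow_le_pow_natAbs hq hq1 ?_
  rw [← Int.natAbs_mul_self' n]
  exact_mod_cast Nat.le_mul_self _

lemma summable_gauss (hq : 0 < q) (hq1 : q < 1) : Summable (gauss q) :=
  (summable_pow_natAbs hq hq1).of_nonneg_of_le (fun n => (gauss_pos hq n).le) (gauss_le hq hq1)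

lemma sechCoeff_pos (hq : 0 < q) (j : ℤ) : 0 < sechCoeff q j := by
  unfold sechCoeff; positivity

lemma sechCoeff_neg (j : ℤ) : sechCoeff q (-j) = sechCoeff q j := by
  simp [sechCoeff, add_comm]

lemma sechCoeff_le (hq : 0 < q) (j : ℤ) : sechCoeff q j ≤ q ^ j.natAbs := by
  have key : ∀ k : ℤ, sechCoeff q k ≤ q ^ k := by
    intro k
    have h1 : 0 < q ^ k := zpow_pos hq _
    rw [sechCoeff, zpow_neg, div_le_iff₀ (by positivity), mul_add, mul_inv_cancel₀ h1.ne']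
    nlinarith [mul_pos h1 h1]
  rw [← zpow_natCast]
  rcases Int.natAbs_eq j with h | h
  · rw [← h]; exact key j
  · have : (j.natAbs : ℤ) = -j := by omega
    rw [this, ← sechCoeff_neg]; exact key _

lemma sechCoeff_le_one (hq : 0 < q) (hq1 : q < 1) (j : ℤ) : sechCoeff q j ≤ 1 :=
  (sechCoeff_le hq j).trans (pow_le_one₀ hq.le hq1.le)

lemma summable_sechCoeff (hq : 0 < q) (hq1 : q < 1) : Summable (sechCoeff q) :=
  (summable_pow_natAbs hq hq1).of_nonneg_of_le (fun n => (sechCoeff_pos hq n).le)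
    (sechCoeff_le hq)

lemma summable_norm_mul_zpow {c : ℤ → ℝ} (hc : Summable c) (h0 : ∀ n, 0 ≤ c n) {z : ℂ}
    (hz : ‖z‖ = 1) : Summable fun n : ℤ => ‖(c n : ℂ) * z ^ n‖ := by
  refine hc.congr fun n => ?_
  rw [norm_mul, norm_zpow, hz, one_zpow, mul_one, Complex.norm_real, Real.norm_of_nonneg (h0 n)]

lemma norm_neg_one_zpow (n : ℤ) : ‖(-1 : ℝ) ^ n‖ = 1 := by
  rw [norm_zpow]; simp

lemma summable_conv (hq : 0 < q) (hq1 : q < 1) (m : ℤ) :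
    Summable fun n : ℤ => (-1) ^ n * gauss q n * sechCoeff q (m - n) := by
  refine Summable.of_norm_bounded (summable_gauss hq hq1) fun n => ?_
  rw [norm_mul, norm_mul, norm_neg_one_zpow, one_mul, Real.norm_of_nonneg (gauss_pos hq n).le,
    Real.norm_of_nonneg (sechCoeff_pos hq _).le]
  exact mul_le_of_le_one_right (gauss_pos hq n).le (sechCoeff_le_one hq hq1 _)

/-- The sum vanishes because the substitution `n ↦ -1 - n` preserves `n * n + n` and flips the
sign of `(-1) ^ n`. -/
lemma tsum_alternating_eq_zero (q : ℝ) : ∑' n : ℤ, (-1 : ℝ) ^ n * q ^ (n * n + n) = 0 := by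
  have h := (Equiv.subLeft (-1 : ℤ)).tsum_eq fun n : ℤ => (-1 : ℝ) ^ n * q ^ (n * n + n)
  have h2 : ∀ n : ℤ, (-1 : ℝ) ^ (Equiv.subLeft (-1 : ℤ) n) *
      q ^ (Equiv.subLeft (-1 : ℤ) n * Equiv.subLeft (-1 : ℤ) n + Equiv.subLeft (-1 : ℤ) n)
      = -((-1 : ℝ) ^ n * q ^ (n * n + n)) := by
    intro n
    have e1 : (-1 : ℝ) ^ (-1 - n) = -(-1) ^ n := by
      rw [zpow_sub₀ (by norm_num)]
      rcases Int.even_or_odd n with hn | hn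
      · simp [hn.neg_one_zpow]
      · simp [hn.neg_one_zpow]
    rw [Equiv.subLeft_apply, e1, show (-1 - n) * (-1 - n) + (-1 - n) = n * n + n by ring]
    ring
  simp_rw [h2] at h
  rw [tsum_neg] at h
  linarith

/-- The difference `q ^ (2 * m + 1) * conv q m - conv q (m + 1)` is a multiple of the alternating
sum above: the factor `q ^ (2 * m) + q ^ (2 * n)` cancels the denominator of `sechCoeff`. -/
lemma conv_succ (hq : 0 < q) (hq1 : q < 1) (m : ℤ) :
    conv q (m + 1) = q ^ (2 * m + 1) * conv q m := by
  have hq0 := hq.ne'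
  have h := (Equiv.addRight (1 : ℤ)).tsum_eq
    fun n : ℤ => (-1 : ℝ) ^ n * gauss q n * sechCoeff q (m + 1 - n)
  have hs : Summable fun n : ℤ => (-1 : ℝ) ^ (n + 1) * gauss q (n + 1) *
      sechCoeff q (m + 1 - (n + 1)) :=
    (Equiv.addRight (1 : ℤ)).summable_iff.2 (summable_conv hq hq1 (m + 1))
  have hzero : q ^ (2 * m + 1) * conv q m - conv q (m + 1) = 0 := by
    rw [conv, conv, ← h, ← tsum_mul_left]
    simp only [Equiv.coe_addRight]
    rw [← ((summable_conv hq hq1 m).mul_left _).tsum_sub hs]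
    rw [← mul_zero (q ^ (m + 1)), ← tsum_alternating_eq_zero q, ← tsum_mul_left]
    refine tsum_congr fun n => ?_
    rw [show m + 1 - (n + 1) = m - n by ring, zpow_add₀ (by norm_num : (-1 : ℝ) ≠ 0)]
    simp only [gauss, sechCoeff]
    have e1 : q ^ ((n + 1) * (n + 1)) = q ^ (n * n) * (q ^ n) ^ 2 * q := by
      rw [show (n + 1) * (n + 1) = n * n + (n + n) + 1 by ring, zpow_add₀ hq0, zpow_add₀ hq0,
        zpow_add₀ hq0, zpow_one]; ring
    have e2 : q ^ (2 * m + 1) = (q ^ m) ^ 2 * q := by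
      rw [show 2 * m + 1 = m + m + 1 by ring, zpow_add₀ hq0, zpow_add₀ hq0, zpow_one]; ring
    rw [e1, e2, zpow_add₀ hq0, zpow_add₀ hq0, neg_sub, zpow_sub₀ hq0, zpow_sub₀ hq0]
    have hm : 0 < q ^ m := zpow_pos hq _
    have hn : 0 < q ^ n := zpow_pos hq _
    have : q ^ m * q ^ m + q ^ n * q ^ n ≠ 0 := by positivity
    have h4 : q ^ m / q ^ n + q ^ n / q ^ m = (q ^ m * q ^ m + q ^ n * q ^ n) / (q ^ m * q ^ n) := by
      field_simp
    rw [h4, zpow_one, zpow_one]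
    field_simp
    ring
  linarith

lemma conv_eq (hq : 0 < q) (hq1 : q < 1) (m : ℤ) : conv q m = gauss q m * conv q 0 := by
  have hq0 := hq.ne'
  induction m using Int.induction_on with
  | zero => simp [gauss]
  | succ i ih =>
    rw [conv_succ hq hq1, ih, gauss, gauss, ← mul_assoc, ← zpow_add₀ hq0]
    congr 2; ring
  | pred i ih =>
    have h := conv_succ hq hq1 (-(i : ℤ) - 1)
    rw [sub_add_cancel, ih] at h
    have h2 : gauss q (-(i : ℤ)) = q ^ (2 * (-(i : ℤ) - 1) + 1) * gauss q (-(i : ℤ) - 1) := by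
      rw [gauss, gauss, ← zpow_add₀ hq0]; congr 1; ring
    rw [h2, mul_assoc] at h
    exact (mul_left_cancel₀ (zpow_ne_zero _ hq0) h).symm

/-- Up to a factor independent of `z`, the kernel is the theta quotient `θ₃ / θ₄`. -/
lemma kern_mul_theta (hq : 0 < q) (hq1 : q < 1) {z : ℂ} (hz : ‖z‖ = 1) :
    kern q z * theta q (-z) = conv q 0 * theta q z := by
  have hz0 : z ≠ 0 := by rintro rfl; simp at hz
  have hA := summable_norm_mul_zpow (summable_sechCoeff hq hq1) (fun n => (sechCoeff_pos hq n).le) hz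
  have hT := summable_norm_mul_zpow (summable_gauss hq hq1) (fun n => (gauss_pos hq n).le)
    (z := -z) (by rwa [norm_neg])
  -- `(m, n) ↦ (m - n, n)` collects the terms of total degree `m`.
  let e : ℤ × ℤ ≃ ℤ × ℤ :=
    { toFun := fun p => (p.1 - p.2, p.2)
      invFun := fun p => (p.1 + p.2, p.2)
      left_inv := fun p => by simp
      right_inv := fun p => by simp }
  have hS := summable_mul_of_summable_norm hA hT
  rw [kern, theta, tsum_mul_tsum_of_summable_norm hA hT, ← e.tsum_eq]
  refine ((e.summable_iff.2 hS).tsum_prod).trans ?_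
  rw [theta, ← tsum_mul_left]
  refine tsum_congr fun m => ?_
  have h1 : (conv q 0 : ℂ) * ((gauss q m : ℂ) * z ^ m) = (conv q m : ℂ) * z ^ m := by
    rw [conv_eq hq hq1 m]; push_cast; ring
  rw [h1, conv, Complex.ofReal_tsum, ← tsum_mul_right]
  refine tsum_congr fun n => ?_
  have h2 : (-z) ^ n = (-1) ^ n * z ^ n := by rw [← mul_zpow]; simp
  simp only [e, Equiv.coe_fn_mk, Function.comp]
  rw [h2, zpow_sub₀ hz0]
  have := zpow_ne_zero n hz0
  push_cast
  field_simp

/-! ### The Jacobi triple product -/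

/-- The finite `q`-Pochhammer product `(Q; Q)_n`. -/
noncomputable def qf (Q : ℝ) (n : ℕ) : ℝ := ∏ i ∈ Finset.range n, (1 - Q ^ (i + 1))

/-- The reciprocal `1 / (Q; Q)_k`, extended by `0` to negative `k`. -/
noncomputable def qfInv (Q : ℝ) : ℤ → ℝ
  | Int.ofNat k => (qf Q k)⁻¹
  | Int.negSucc _ => 0

/-- The coefficient of `q ^ (m ^ 2) z ^ m` in the `N`-th partial product of the triple product:
the Gaussian binomial of `2 * N` over `N + m` in base `Q = q ^ 2`. -/
noncomputable def gbin (Q : ℝ) (N : ℕ) (m : ℤ) : ℝ :=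
  qf Q (2 * N) * (qfInv Q (N + m) * qfInv Q (N - m))

/-- The partial product of the triple product at `z = exp (i x)`. -/
noncomputable def partialProd (q : ℝ) (N : ℕ) (x : ℝ) : ℝ :=
  ∏ n ∈ Finset.range N, (1 + 2 * q ^ (2 * n + 1) * Real.cos x + (q ^ (2 * n + 1)) ^ 2)

lemma qf_pos (hQ : 0 < Q) (hQ1 : Q < 1) (n : ℕ) : 0 < qf Q n :=
  Finset.prod_pos fun i _ => sub_pos.2 (pow_lt_one₀ hQ.le hQ1 (Nat.succ_ne_zero i))

lemma qf_succ (n : ℕ) : qf Q (n + 1) = qf Q n * (1 - Q ^ (n + 1)) := by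
  rw [qf, qf, Finset.prod_range_succ]

lemma qf_antitone (hQ : 0 < Q) (hQ1 : Q < 1) : Antitone (qf Q) :=
  antitone_nat_of_succ_le fun n => by
    rw [qf_succ]
    exact mul_le_of_le_one_right (qf_pos hQ hQ1 n).le (by linarith [pow_pos hQ (n + 1)])

lemma exists_qf_tendsto (hQ : 0 < Q) (hQ1 : Q < 1) :
    ∃ P : ℝ, 0 < P ∧ Filter.Tendsto (qf Q) Filter.atTop (nhds P) := by
  have hs : Summable fun i : ℕ => -Q ^ (i + 1) :=
    ((summable_nat_add_iff 1).2 (summable_geometric_of_lt_one hQ.le hQ1)).neg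
  have hl := (Real.summable_log_one_add_of_summable hs).hasSum.tendsto_sum_nat
  refine ⟨_, Real.exp_pos _, ((Real.continuous_exp.tendsto _).comp hl).congr fun n => ?_⟩
  rw [Function.comp, Real.exp_sum, qf]
  refine Finset.prod_congr rfl fun i _ => ?_
  have h1 : Q ^ (i + 1) < 1 := pow_lt_one₀ hQ.le hQ1 (Nat.succ_ne_zero i)
  rw [Real.exp_log (by linarith), sub_eq_add_neg]

lemma qfInv_natCast (k : ℕ) : qfInv Q (k : ℤ) = (qf Q k)⁻¹ := rfl

lemma qfInv_nonneg (hQ : 0 < Q) (hQ1 : Q < 1) (k : ℤ) : 0 ≤ qfInv Q k := by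
  cases k with
  | ofNat k => exact inv_nonneg.2 (qf_pos hQ hQ1 k).le
  | negSucc k => exact le_rfl

/-- The recursion also holds for `k ≤ 0`; at `k = 0` it reads `0 = 0 * 1`. -/
lemma qfInv_sub_one (hQ : 0 < Q) (hQ1 : Q < 1) (k : ℤ) :
    qfInv Q (k - 1) = (1 - Q ^ k) * qfInv Q k := by
  cases k with
  | ofNat k =>
    cases k with
    | zero =>
      rw [show Int.ofNat 0 - 1 = Int.negSucc 0 from rfl]
      simp [qfInv]
    | succ k =>
      have h1 := (qf_pos hQ hQ1 k).ne'
      have h2 := (qf_pos hQ hQ1 (k + 1)).ne'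
      have e : (Int.ofNat (k + 1)) - 1 = (k : ℤ) := by simp
      rw [e, qfInv_natCast, Int.ofNat_eq_natCast, qfInv_natCast, zpow_natCast, eq_comm,
        ← div_eq_mul_inv, div_eq_iff h2, qf_succ]
      field_simp
  | negSucc k =>
    rw [show Int.negSucc k - 1 = Int.negSucc (k + 1) from rfl]
    simp [qfInv]

lemma gbin_nonneg (hQ : 0 < Q) (hQ1 : Q < 1) (N : ℕ) (m : ℤ) : 0 ≤ gbin Q N m :=
  mul_nonneg (qf_pos hQ hQ1 _).le (mul_nonneg (qfInv_nonneg hQ hQ1 _) (qfInv_nonneg hQ hQ1 _))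

lemma gbin_le (hQ : 0 < Q) (hQ1 : Q < 1) {P : ℝ} (hP : 0 < P)
    (hlim : Filter.Tendsto (qf Q) Filter.atTop (nhds P)) (N : ℕ) (m : ℤ) :
    gbin Q N m ≤ P⁻¹ * P⁻¹ := by
  have hb : ∀ k, qfInv Q k ≤ P⁻¹ := by
    intro k
    cases k with
    | ofNat k => exact inv_anti₀ hP ((qf_antitone hQ hQ1).le_of_tendsto hlim k)
    | negSucc k => exact inv_nonneg.2 hP.le
  have h1 : qf Q (2 * N) ≤ 1 := by
    simpa [qf] using (qf_antitone hQ hQ1) (Nat.zero_le (2 * N))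
  have h2 := mul_le_mul (hb (N + m)) (hb (N - m)) (qfInv_nonneg hQ hQ1 _) (inv_nonneg.2 hP.le)
  exact (mul_le_of_le_one_left (mul_nonneg (qfInv_nonneg hQ hQ1 _) (qfInv_nonneg hQ hQ1 _)) h1).trans
    h2

lemma gbin_tendsto {P : ℝ} (hP : 0 < P)
    (hlim : Filter.Tendsto (qf Q) Filter.atTop (nhds P)) (m : ℤ) :
    Filter.Tendsto (fun N => gbin Q N m) Filter.atTop (nhds P⁻¹) := by
  have hu : Filter.Tendsto (qfInv Q) Filter.atTop (nhds P⁻¹) := by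
    have h1 := (hlim.comp (Filter.tendsto_atTop_mono (fun k : ℤ => Int.self_le_toNat k)
      Filter.tendsto_id |> fun h => (tendsto_natCast_atTop_iff (R := ℤ)).1 h)).inv₀ hP.ne'
    refine h1.congr' ?_
    filter_upwards [Filter.eventually_ge_atTop (0 : ℤ)] with k hk
    lift k to ℕ using hk
    simp [qfInv_natCast]
  have hN : Filter.Tendsto (fun N : ℕ => (N : ℤ)) Filter.atTop Filter.atTop :=
    tendsto_natCast_atTop_atTop
  have h2 : Filter.Tendsto (fun N : ℕ => 2 * N) Filter.atTop Filter.atTop :=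
    Filter.tendsto_id.const_mul_atTop' (by norm_num)
  have h := (hlim.comp h2).mul ((hu.comp (Filter.tendsto_atTop_add_const_right _ m hN)).mul
    (hu.comp (Filter.tendsto_atTop_add_const_right _ (-m) hN)))
  rw [mul_inv_cancel_left₀ hP.ne'] at h
  exact h

/-- The recursion reflecting multiplication of the `N`-th partial product by
`(1 + q ^ (2 * N + 1) * z) * (1 + q ^ (2 * N + 1) / z)`. Since `qfInv_sub_one` holds for all
integers, no boundary case has to be separated. -/
lemma gbin_succ (hq : 0 < q) (hq1 : q < 1) (N : ℕ) (m : ℤ) :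
    gauss q m * gbin (q ^ 2) (N + 1) m = (1 + (q ^ (2 * N + 1)) ^ 2) * (gauss q m * gbin (q ^ 2) N m)
      + q ^ (2 * N + 1) * (gauss q (m - 1) * gbin (q ^ 2) N (m - 1)
        + gauss q (m + 1) * gbin (q ^ 2) N (m + 1)) := by
  have hq0 := hq.ne'
  have hQ : 0 < q ^ 2 := by positivity
  have hQ1 : q ^ 2 < 1 := pow_lt_one₀ hq.le hq1 two_ne_zero
  have step := qfInv_sub_one hQ hQ1
  have hQz : ∀ k : ℤ, (q ^ 2) ^ k = (q ^ k) ^ 2 := fun k => by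
    rw [← zpow_natCast, ← zpow_natCast, ← zpow_mul, ← zpow_mul, mul_comm]
  have a1 : qfInv (q ^ 2) (N + m) = (1 - (q ^ 2) ^ ((N : ℤ) + m + 1)) * qfInv (q ^ 2) (N + m + 1) := by
    rw [← step]; congr 1; ring
  have a2 : qfInv (q ^ 2) (N - m) = (1 - (q ^ 2) ^ ((N : ℤ) - m + 1)) * qfInv (q ^ 2) (N - m + 1) := by
    rw [← step]; congr 1; ring
  have a3 : qfInv (q ^ 2) (N + m - 1) = (1 - (q ^ 2) ^ ((N : ℤ) + m)) * qfInv (q ^ 2) (N + m) :=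
    step _
  have a4 : qfInv (q ^ 2) (N - m - 1) = (1 - (q ^ 2) ^ ((N : ℤ) - m)) * qfInv (q ^ 2) (N - m) :=
    step _
  have g1 : gauss q (m - 1) = gauss q m * q / (q ^ m) ^ 2 := by
    rw [gauss, gauss, show (m - 1) * (m - 1) = m * m + 1 - (m + m) by ring, zpow_sub₀ hq0,
      zpow_add₀ hq0, zpow_add₀ hq0, zpow_one, sq]
  have g2 : gauss q (m + 1) = gauss q m * q * (q ^ m) ^ 2 := by
    rw [gauss, gauss, show (m + 1) * (m + 1) = m * m + 1 + (m + m) by ring, zpow_add₀ hq0,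
      zpow_add₀ hq0, zpow_add₀ hq0, zpow_one, sq]
  have hm : q ^ m ≠ 0 := zpow_ne_zero _ hq0
  simp only [gbin]
  rw [show 2 * (N + 1) = 2 * N + 1 + 1 by ring, qf_succ, qf_succ, g1, g2,
    show ((N + 1 : ℕ) : ℤ) + m = N + m + 1 by push_cast; ring,
    show ((N + 1 : ℕ) : ℤ) - m = N - m + 1 by push_cast; ring,
    show (N : ℤ) + (m - 1) = N + m - 1 by ring, show (N : ℤ) - (m - 1) = N - m + 1 by ring,
    show (N : ℤ) + (m + 1) = N + m + 1 by ring, show (N : ℤ) - (m + 1) = N - m - 1 by ring,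
    a3, a4, a1, a2]
  simp only [hQz, zpow_add₀ hq0, zpow_sub₀ hq0, zpow_one, zpow_natCast]
  generalize qfInv (q ^ 2) (N + m + 1) = U
  generalize qfInv (q ^ 2) (N - m + 1) = V
  generalize qf (q ^ 2) (2 * N) = W
  generalize gauss q m = T
  generalize q ^ m = Y at *
  have e1 : (q ^ 2) ^ (2 * N + 1) = (q ^ N) ^ 4 * q ^ 2 := by ring
  have e2 : (q ^ 2) ^ (2 * N + 1 + 1) = (q ^ N) ^ 4 * q ^ 4 := by ring
  have e3 : q ^ (2 * N + 1) = (q ^ N) ^ 2 * q := by ring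
  rw [e1, e2, e3]
  generalize q ^ N = X
  field_simp
  ring

/-- The finite form of the Jacobi triple product. -/
lemma partialProd_eq_tsum (hq : 0 < q) (hq1 : q < 1) (N : ℕ) (x : ℝ) :
    (partialProd q N x : ℂ) =
      ∑' m : ℤ, ((gauss q m * gbin (q ^ 2) N m : ℝ) : ℂ) * Complex.exp (x * Complex.I) ^ m := by
  have hQ : 0 < q ^ 2 := by positivity
  have hQ1 : q ^ 2 < 1 := pow_lt_one₀ hq.le hq1 two_ne_zero
  obtain ⟨P, hP, hlim⟩ := exists_qf_tendsto hQ hQ1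
  have hz : ‖Complex.exp (x * Complex.I)‖ = 1 := Complex.norm_exp_ofReal_mul_I x
  have hz0 : Complex.exp (x * Complex.I) ≠ 0 := Complex.exp_ne_zero _
  have hcos : (2 * Real.cos x : ℂ) = Complex.exp (x * Complex.I) + (Complex.exp (x * Complex.I))⁻¹ := by
    rw [← Complex.exp_neg, Complex.ofReal_cos, Complex.two_cos]
    congr 2; ring
  set z := Complex.exp (x * Complex.I)
  have hs : ∀ N, Summable fun m : ℤ => ((gauss q m * gbin (q ^ 2) N m : ℝ) : ℂ) * z ^ m := by
    intro N
    have h0 : ∀ m, 0 ≤ gauss q m * gbin (q ^ 2) N m := fun m =>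
      mul_nonneg (gauss_pos hq m).le (gbin_nonneg hQ hQ1 N m)
    refine (summable_norm_mul_zpow (c := fun m => gauss q m * gbin (q ^ 2) N m) ?_ h0 hz).of_norm
    exact ((summable_gauss hq hq1).mul_right (P⁻¹ * P⁻¹)).of_nonneg_of_le h0 fun m =>
      mul_le_mul_of_nonneg_left (gbin_le hQ hQ1 hP hlim N m) (gauss_pos hq m).le
  induction N with
  | zero =>
    rw [tsum_eq_single 0]
    · simp [partialProd, gauss, gbin, qf, show qfInv (q ^ 2) 0 = 1 by simp [qfInv, qf]]
    · intro m hm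
      rcases lt_or_gt_of_ne hm with h | h
      · obtain ⟨k, rfl⟩ := Int.eq_negSucc_of_lt_zero h
        simp [gbin, qfInv]
      · obtain ⟨k, hk⟩ := Int.eq_negSucc_of_lt_zero (a := -m) (by omega)
        simp [gbin, hk, qfInv]
  | succ N ih =>
    have hs1 := (Equiv.subRight (1 : ℤ)).summable_iff.2 (hs N)
    have hs2 := (Equiv.addRight (1 : ℤ)).summable_iff.2 (hs N)
    have t1 := (Equiv.subRight (1 : ℤ)).tsum_eq
      fun m : ℤ => ((gauss q m * gbin (q ^ 2) N m : ℝ) : ℂ) * z ^ m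
    have t2 := (Equiv.addRight (1 : ℤ)).tsum_eq
      fun m : ℤ => ((gauss q m * gbin (q ^ 2) N m : ℝ) : ℂ) * z ^ m
    rw [← ih] at t1 t2
    have hterm : ∀ m : ℤ, ((gauss q m * gbin (q ^ 2) (N + 1) m : ℝ) : ℂ) * z ^ m =
        (1 + (q ^ (2 * N + 1)) ^ 2) * (((gauss q m * gbin (q ^ 2) N m : ℝ) : ℂ) * z ^ m)
        + (q ^ (2 * N + 1) * z *
            (((gauss q (m - 1) * gbin (q ^ 2) N (m - 1) : ℝ) : ℂ) * z ^ (m - 1))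
          + q ^ (2 * N + 1) * z⁻¹ *
            (((gauss q (m + 1) * gbin (q ^ 2) N (m + 1) : ℝ) : ℂ) * z ^ (m + 1))) := by
      intro m
      rw [gbin_succ hq hq1, zpow_sub₀ hz0, zpow_add₀ hz0]
      push_cast
      field_simp
    simp_rw [hterm]
    have s1 := (hs N).mul_left (1 + ((q : ℂ) ^ (2 * N + 1)) ^ 2)
    have s2 := hs1.mul_left ((q : ℂ) ^ (2 * N + 1) * z)
    have s3 := hs2.mul_left ((q : ℂ) ^ (2 * N + 1) * z⁻¹)
    refine Eq.trans ?_ (s1.tsum_add (s2.add s3)).symm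
    rw [s2.tsum_add s3, tsum_mul_left, tsum_mul_left, tsum_mul_left]
    simp only [Function.comp_def]
    rw [t1, t2, ← ih]
    have hsucc : partialProd q (N + 1) x = partialProd q N x *
        (1 + q ^ (2 * N + 1) * (2 * Real.cos x) + (q ^ (2 * N + 1)) ^ 2) := by
      rw [partialProd, partialProd, Finset.prod_range_succ]; ring
    rw [hsucc]
    push_cast
    rw [← Complex.ofReal_cos, hcos]
    ring

/-- The Jacobi triple product, with its constant left unspecified. -/
lemma partialProd_tendsto (hq : 0 < q) (hq1 : q < 1) :
    ∃ P : ℝ, 0 < P ∧ ∀ x : ℝ, Filter.Tendsto (fun N => (partialProd q N x : ℂ)) Filter.atTop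
      (nhds (P * theta q (Complex.exp (x * Complex.I)))) := by
  have hQ : 0 < q ^ 2 := by positivity
  have hQ1 : q ^ 2 < 1 := pow_lt_one₀ hq.le hq1 two_ne_zero
  obtain ⟨P, hP, hlim⟩ := exists_qf_tendsto hQ hQ1
  refine ⟨P⁻¹, inv_pos.2 hP, fun x => ?_⟩
  have hz : ‖Complex.exp (x * Complex.I)‖ = 1 := Complex.norm_exp_ofReal_mul_I x
  simp_rw [partialProd_eq_tsum hq hq1]
  rw [theta, ← tsum_mul_left]
  refine tendsto_tsum_of_dominated_convergence
    ((summable_gauss hq hq1).mul_right (P⁻¹ * P⁻¹)) (fun m => ?_) (.of_forall fun N m => ?_)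
  · have h := (Complex.continuous_ofReal.tendsto _).comp
      ((gbin_tendsto hP hlim m).const_mul (gauss q m))
    convert h.mul_const (Complex.exp (x * Complex.I) ^ m) using 2
    · simp
    · push_cast; ring
  · have h0 := mul_nonneg (gauss_pos hq m).le (gbin_nonneg hQ hQ1 N m)
    rw [norm_mul, norm_zpow, hz, one_zpow, mul_one, Complex.norm_real, Real.norm_of_nonneg h0]
    exact mul_le_mul_of_nonneg_left (gbin_le hQ hQ1 hP hlim N m) (gauss_pos hq m).le

/-! ### The product formula and the bound -/

/-- The kernel on the real line, in the form of a cosine series. -/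
noncomputable def cosKern (q x : ℝ) : ℝ :=
  1 / 2 + 2 * ∑' j : ℕ, Real.cos (((j : ℝ) + 1) * x) / (q ^ (j + 1) + (q ^ (j + 1))⁻¹)

lemma sechCoeff_natCast_succ (j : ℕ) :
    sechCoeff q ((j : ℤ) + 1) = 1 / (q ^ (j + 1) + (q ^ (j + 1))⁻¹) := by
  rw [sechCoeff, zpow_neg, ← Nat.cast_succ, zpow_natCast]

lemma kern_exp_eq (hq : 0 < q) (hq1 : q < 1) (x : ℝ) :
    kern q (Complex.exp (x * Complex.I)) = cosKern q x := by
  have hz : ‖Complex.exp (x * Complex.I)‖ = 1 := Complex.norm_exp_ofReal_mul_I x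
  have hs := (summable_norm_mul_zpow (summable_sechCoeff hq hq1)
    (fun n => (sechCoeff_pos hq n).le) hz).of_norm
  have s1 : Summable fun n : ℕ => (sechCoeff q ((n : ℤ) + 1) : ℂ) *
      Complex.exp (x * Complex.I) ^ ((n : ℤ) + 1) :=
    hs.comp_injective (i := fun n : ℕ => (n : ℤ) + 1) fun a b h => by simpa using h
  have s2 : Summable fun n : ℕ => (sechCoeff q (-((n : ℤ) + 1)) : ℂ) *
      Complex.exp (x * Complex.I) ^ (-((n : ℤ) + 1)) :=
    hs.comp_injective (i := fun n : ℕ => -((n : ℤ) + 1)) fun a b h => by simpa using h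
  have hterm : ∀ j : ℕ, (sechCoeff q ((j : ℤ) + 1) : ℂ) * Complex.exp (x * Complex.I) ^ ((j : ℤ) + 1)
      + (sechCoeff q (-((j : ℤ) + 1)) : ℂ) * Complex.exp (x * Complex.I) ^ (-((j : ℤ) + 1))
      = ((2 * (Real.cos (((j : ℝ) + 1) * x) / (q ^ (j + 1) + (q ^ (j + 1))⁻¹)) : ℝ) : ℂ) := by
    intro j
    have h2 : ((2 * Real.cos (((j : ℝ) + 1) * x) : ℝ) : ℂ)
        = Complex.exp (x * Complex.I) ^ ((j : ℤ) + 1)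
          + Complex.exp (x * Complex.I) ^ (-((j : ℤ) + 1)) := by
      rw [← Complex.exp_int_mul, ← Complex.exp_int_mul, Complex.ofReal_mul, Complex.ofReal_cos,
        Complex.ofReal_ofNat, Complex.two_cos]
      push_cast
      congr 2 <;> ring
    rw [sechCoeff_neg, ← mul_add, ← h2, sechCoeff_natCast_succ, ← Complex.ofReal_mul]
    congr 1
    ring
  have h0 : (sechCoeff q 0 : ℂ) * Complex.exp (x * Complex.I) ^ (0 : ℤ) = ((1 / 2 : ℝ) : ℂ) := by
    rw [zpow_zero, mul_one]; norm_num [sechCoeff]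
  have h := (HasSum.of_add_one_of_neg_add_one
    (f := fun j : ℤ => (sechCoeff q j : ℂ) * Complex.exp (x * Complex.I) ^ j)
    s1.hasSum s2.hasSum).tsum_eq
  rw [kern, h, add_right_comm, ← s1.tsum_add s2, tsum_congr hterm, h0, ← Complex.ofReal_tsum,
    tsum_mul_left, ← Complex.ofReal_add, cosKern, add_comm]

/-- The product formula `cosKern q x / cosKern q 0 = (θ₃ / θ₄)(x) * (θ₄ / θ₃)(0)`, with
denominators cleared and in terms of the limit `G` of the products `partialProd`. -/
lemma exists_product_formula (hq : 0 < q) (hq1 : q < 1) :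
    ∃ G : ℝ → ℝ, (∀ x, Filter.Tendsto (fun N => partialProd q N x) Filter.atTop (nhds (G x))) ∧
      ∀ x, cosKern q x * G (x + π) * G 0 = cosKern q 0 * G π * G x := by
  obtain ⟨P, hP, hlim⟩ := partialProd_tendsto hq hq1
  have hre : ∀ x, Filter.Tendsto (fun N => partialProd q N x) Filter.atTop
      (nhds (P * theta q (Complex.exp (x * Complex.I))).re) := fun x =>
    ((Complex.continuous_re.tendsto _).comp (hlim x)).congr fun N => by simp
  refine ⟨_, hre, fun x => ?_⟩
  -- A limit of reals is real, so `P * theta` agrees with its real part on the unit circle.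
  have hG : ∀ x : ℝ, (((P * theta q (Complex.exp (x * Complex.I))).re : ℝ) : ℂ)
      = P * theta q (Complex.exp (x * Complex.I)) := fun x =>
    tendsto_nhds_unique ((Complex.continuous_ofReal.tendsto _).comp (hre x)) (hlim x)
  have hneg : ∀ x : ℝ, Complex.exp ((x + π : ℝ) * Complex.I) = -Complex.exp (x * Complex.I) := by
    intro x; push_cast; rw [add_mul, Complex.exp_add, Complex.exp_pi_mul_I]; ring
  have hk : ∀ x : ℝ, (cosKern q x : ℂ) * theta q (Complex.exp ((x + π : ℝ) * Complex.I))
      = conv q 0 * theta q (Complex.exp (x * Complex.I)) := by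
    intro x
    rw [hneg, ← kern_exp_eq hq hq1]
    exact kern_mul_theta hq hq1 (Complex.norm_exp_ofReal_mul_I x)
  have hx := hk x
  have h0 := hk 0
  rw [zero_add] at h0
  apply Complex.ofReal_injective
  rw [Complex.ofReal_mul, Complex.ofReal_mul, Complex.ofReal_mul, Complex.ofReal_mul,
    hG, hG, hG, hG]
  linear_combination (P * P * theta q (Complex.exp ((0 : ℝ) * Complex.I)) : ℂ) * hx
    - (P * P * theta q (Complex.exp (x * Complex.I)) : ℂ) * h0

lemma one_sub_sq_le_factor {y : ℝ} (hy : 0 ≤ y) (x : ℝ) :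
    (1 - y) ^ 2 ≤ 1 + 2 * y * Real.cos x + y ^ 2 := by
  nlinarith [Real.neg_one_le_cos x]

lemma partialProd_le_zero (hq : 0 < q) (N : ℕ) (x : ℝ) :
    partialProd q N x ≤ partialProd q N 0 := by
  refine Finset.prod_le_prod (fun n _ => ?_) fun n _ => ?_
  · exact (sq_nonneg _).trans (one_sub_sq_le_factor (pow_pos hq _).le x)
  · have := pow_pos hq (2 * n + 1)
    rw [Real.cos_zero]
    gcongr
    exact Real.cos_le_one x

lemma partialProd_pi_le (hq : 0 < q) (N : ℕ) (x : ℝ) :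
    partialProd q N π ≤ partialProd q N x := by
  refine Finset.prod_le_prod (fun n _ => ?_) fun n _ => ?_
  · exact (sq_nonneg _).trans (one_sub_sq_le_factor (pow_pos hq _).le π)
  · refine le_trans (le_of_eq ?_) (one_sub_sq_le_factor (pow_pos hq _).le x)
    rw [Real.cos_pi]; ring

lemma one_le_partialProd_zero (hq : 0 < q) (N : ℕ) : 1 ≤ partialProd q N 0 := by
  refine Finset.prod_const_one.symm.trans_le
    (Finset.prod_le_prod (fun _ _ => zero_le_one) fun n _ => ?_)
  have := pow_pos hq (2 * n + 1)
  rw [Real.cos_zero]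
  nlinarith

/-- The power series of `log ((1 + y) / (1 - y))` has only nonnegative coefficients and no constant
term, so its value at `c * y` is at most `c` times its value at `y`. -/
lemma rpow_le_of_scale {y c : ℝ} (hy : 0 < y) (hy1 : y < 1) (hc : 0 < c) (hc1 : c ≤ 1) :
    ((1 - y) / (1 + y)) ^ c ≤ (1 - c * y) / (1 + c * y) := by
  have hcy : 0 < c * y := mul_pos hc hy
  have hcy1 : c * y < 1 := by nlinarith
  have h1 := Real.hasSum_log_sub_log_of_abs_lt_one (abs_lt.2 ⟨by linarith, hy1⟩)
  have h2 := Real.hasSum_log_sub_log_of_abs_lt_one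
    (abs_lt.2 ⟨by linarith, hcy1⟩ : |c * y| < 1)
  have h := hasSum_le (fun k => ?_) h2 (h1.mul_left c)
  · have hp : 0 < (1 - y) / (1 + y) := div_pos (by linarith) (by linarith)
    have hp2 : 0 < (1 - c * y) / (1 + c * y) := div_pos (by linarith) (by linarith)
    rw [← Real.log_le_log_iff (Real.rpow_pos_of_pos hp c) hp2, Real.log_rpow hp,
      Real.log_div (by linarith) (by linarith), Real.log_div (by linarith) (by linarith)]
    linarith
  · have hck : c ^ (2 * k + 1) ≤ c := by
      simpa using pow_le_pow_of_le_one hc.le hc1 (Nat.le_add_left 1 (2 * k))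
    rw [mul_pow]
    have : 0 ≤ 2 * (1 / (2 * (k : ℝ) + 1)) * y ^ (2 * k + 1) := by positivity
    nlinarith

/-- Scaling `y = q` by `c = q ^ (2 * n)` in each factor produces the exponents `2 * q ^ (2 * n)`,
whose sum over `n` is `2 / (1 - q ^ 2)`. -/
lemma partialProd_pi_ge (hq : 0 < q) (hq1 : q < 1) (N : ℕ) :
    ((1 - q) / (1 + q)) ^ (2 / (1 - q ^ 2)) * partialProd q N 0 ≤ partialProd q N π := by
  have hp : 0 < (1 - q) / (1 + q) := div_pos (by linarith) (by linarith)
  have hp1 : (1 - q) / (1 + q) ≤ 1 := (div_le_one (by linarith)).2 (by linarith)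
  have hQ : 0 < q ^ 2 := by positivity
  have hQ1 : q ^ 2 < 1 := pow_lt_one₀ hq.le hq1 two_ne_zero
  have hgeom : ∑ n ∈ Finset.range N, (q ^ 2) ^ n * 2 ≤ 2 / (1 - q ^ 2) := by
    rw [← Finset.sum_mul, div_eq_inv_mul, ← tsum_geometric_of_lt_one hQ.le hQ1]
    gcongr
    exact (summable_geometric_of_lt_one hQ.le hQ1).sum_le_tsum _ fun n _ => by positivity
  have hpow : ((1 - q) / (1 + q)) ^ (2 / (1 - q ^ 2))
      ≤ ∏ n ∈ Finset.range N, ((1 - q) / (1 + q)) ^ ((q ^ 2) ^ n * 2) := by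
    rw [← Real.rpow_sum_of_pos hp]
    exact Real.rpow_le_rpow_of_exponent_ge hp hp1 hgeom
  refine (mul_le_mul_of_nonneg_right hpow
    (zero_le_one.trans (one_le_partialProd_zero hq N))).trans ?_
  rw [partialProd, partialProd, ← Finset.prod_mul_distrib]
  refine Finset.prod_le_prod (fun n _ => ?_) fun n _ => ?_
  · have := pow_pos hq (2 * n + 1)
    rw [Real.cos_zero]; positivity
  · have h := rpow_le_of_scale hq hq1 (pow_pos hQ n) (pow_le_one₀ hQ.le hQ1.le)
    have hy := pow_pos hq (2 * n + 1)
    rw [show (q ^ 2) ^ n * q = q ^ (2 * n + 1) by ring] at h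
    rw [Real.rpow_mul hp.le, Real.cos_zero, Real.cos_pi, Real.rpow_two]
    generalize q ^ (2 * n + 1) = y at *
    calc _ ≤ ((1 - y) / (1 + y)) ^ 2 * (1 + 2 * y * 1 + y ^ 2) := by
          gcongr
      _ = _ := by field_simp; ring

/-- Each coefficient satisfies `1 / (q ^ j + q ^ (-j)) ≥ q ^ j / (1 + q ^ 2)`, strictly for
`j = 2`; the right-hand sides form a geometric series. -/
lemma cosKern_zero_gt (hq : 0 < q) (hq1 : q < 1) :
    1 / 2 + 2 * q / ((1 + q ^ 2) * (1 - q)) < cosKern q 0 := by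
  have hle : ∀ j : ℕ, q / (1 + q ^ 2) * q ^ j ≤ sechCoeff q ((j : ℤ) + 1) := by
    intro j
    have hj := pow_pos hq j
    rw [sechCoeff_natCast_succ, div_mul_eq_mul_div, ← pow_succ',
      div_le_div_iff₀ (by positivity) (by positivity),
      mul_add, mul_inv_cancel₀ (pow_pos hq _).ne']
    have : q ^ (j + 1) ≤ q := pow_le_of_le_one hq.le hq1.le (Nat.succ_ne_zero j)
    nlinarith [pow_pos hq (j + 1)]
  have hlt : q / (1 + q ^ 2) * q ^ 1 < sechCoeff q (((1 : ℕ) : ℤ) + 1) := by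
    rw [sechCoeff_natCast_succ, div_mul_eq_mul_div, ← pow_succ',
      div_lt_div_iff₀ (by positivity) (by positivity),
      mul_add, mul_inv_cancel₀ (pow_pos hq _).ne']
    have : q ^ (1 + 1) < q := by
      rw [pow_succ, pow_one]; nlinarith
    nlinarith [pow_pos hq (1 + 1)]
  have hs : Summable fun j : ℕ => sechCoeff q ((j : ℤ) + 1) :=
    (summable_sechCoeff hq hq1).comp_injective (i := fun n : ℕ => (n : ℤ) + 1)
      fun a b h => by simpa using h
  have hg := (summable_geometric_of_lt_one hq.le hq1).mul_left (q / (1 + q ^ 2))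
  have h := Summable.tsum_lt_tsum hle hlt hg hs
  rw [tsum_mul_left, tsum_geometric_of_lt_one hq.le hq1] at h
  have h1 : cosKern q 0 = 1 / 2 + 2 * ∑' j : ℕ, sechCoeff q ((j : ℤ) + 1) := by
    simp [cosKern, sechCoeff_natCast_succ]
  have h2 : 2 * q / ((1 + q ^ 2) * (1 - q)) = 2 * (q / (1 + q ^ 2) * (1 - q)⁻¹) := by
    have : 1 - q ≠ 0 := by linarith
    field_simp
  rw [h1, h2]
  linarith

end DnKernel

theorem stmt_15 (q : ℝ) (hq : 0 < q) (hq1 : q < 1) (x : ℝ) :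
    1 / 2 + 2 * ∑' j : ℕ, Real.cos (((j : ℝ) + 1) * x) / (q ^ (j + 1) + (q ^ (j + 1))⁻¹)
      > (1 / 2 + 2 * q / ((1 + q ^ 2) * (1 - q)))
          * ((1 - q) / (1 + q)) ^ ((4 : ℝ) / (1 - q ^ 2)) := by
  obtain ⟨G, hG, hprod⟩ := DnKernel.exists_product_formula hq hq1
  have hp : 0 < (1 - q) / (1 + q) := div_pos (by linarith) (by linarith)
  have h0 : 1 ≤ G 0 := ge_of_tendsto' (hG 0) (DnKernel.one_le_partialProd_zero hq)
  have hle : ∀ y, G y ≤ G 0 := fun y =>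
    le_of_tendsto_of_tendsto' (hG y) (hG 0) fun N => DnKernel.partialProd_le_zero hq N y
  have hge : ∀ y, G π ≤ G y := fun y =>
    le_of_tendsto_of_tendsto' (hG π) (hG y) fun N => DnKernel.partialProd_pi_le hq N y
  have hpi : ((1 - q) / (1 + q)) ^ (2 / (1 - q ^ 2)) * G 0 ≤ G π :=
    le_of_tendsto_of_tendsto' ((hG 0).const_mul _) (hG π) (DnKernel.partialProd_pi_ge hq hq1)
  have hsq : ((1 - q) / (1 + q)) ^ ((4 : ℝ) / (1 - q ^ 2))
      = (((1 - q) / (1 + q)) ^ (2 / (1 - q ^ 2))) ^ 2 := by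
    rw [← Real.rpow_mul_natCast hp.le]; congr 1; push_cast; ring
  have hs : 0 < ((1 - q) / (1 + q)) ^ (2 / (1 - q ^ 2)) := Real.rpow_pos_of_pos hp _
  have hK := DnKernel.cosKern_zero_gt hq hq1
  have hK0 : 0 < DnKernel.cosKern q 0 := by
    refine lt_trans ?_ hK
    have : 0 < 1 - q := by linarith
    positivity
  have hx := hprod x
  change _ < DnKernel.cosKern q x
  rw [hsq]
  set s := ((1 - q) / (1 + q)) ^ (2 / (1 - q ^ 2))
  refine lt_of_lt_of_le (mul_lt_mul_of_pos_right hK (by positivity)) ?_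
  have hsG : 0 < s * G 0 := by positivity
  have hy : 0 < G (x + π) := hsG.trans_le (hpi.trans (hge _))
  refine le_of_mul_le_mul_right ?_ (mul_pos hy (zero_lt_one.trans_le h0))
  calc DnKernel.cosKern q 0 * s ^ 2 * (G (x + π) * G 0)
      ≤ DnKernel.cosKern q 0 * s ^ 2 * (G 0 * G 0) := by
        gcongr; exact hle _
    _ = DnKernel.cosKern q 0 * ((s * G 0) * (s * G 0)) := by ring
    _ ≤ DnKernel.cosKern q 0 * (G π * G x) := by
        exact mul_le_mul_of_nonneg_left
          (mul_le_mul hpi (hpi.trans (hge x)) hsG.le (hsG.le.trans hpi)) hK0.le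
    _ = DnKernel.cosKern q x * (G (x + π) * G 0) := by rw [← mul_assoc, ← hx]; ring
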